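/- Let X be a finite set of points in ℝ^d, let dist : X × X → ℝ₊ be a function, let k ≤ |X|, and for each j let d*_j denote the maximum spacing over all partitions of X into j+1 nonempty groups induced by the leaves of a standard axis-aligned decision tree with j+1 leaves. Let L₀ = {X}, and for i = 0,...,k−2 let L_{i+1} be obtained from L_i by choosing a group ℓ ∈ L_i and an axis-aligned cut γ splitting the points of ℓ into two nonempty sets so that the resulting partition has spacing at least as large as that obtained by any other choice of group in L_i and axis-aligned cut (the greedy MaxSpacing step). Then for every 1 ≤ i ≤ k−1, sp(L_i) = d*_i; i.e., the greedy algorithm produces, for every i, a partition of maximum spacing among all explainable partitions of X with i+1 groups. -/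

import Mathlib

open Finset
open scoped Classical

/-- A standard (axis-aligned) decision tree over `ℝ^d`: each internal node is labeled
by a coordinate and a threshold. -/
inductive DTree (d : ℕ) where
  | leaf : DTree d
  | node (i : Fin d) (θ : ℝ) (l r : DTree d) : DTree d

/-- The cells (regions of `ℝ^d`) associated with the leaves of a decision tree:
a point reaching a node goes left if its labeled coordinate is `≤` the threshold,
and right otherwise. -/
def DTree.cells {d : ℕ} : DTree d → List (Set (Fin d → ℝ))
  | .leaf => [Set.univ]
  | .node i θ l r =>
      (l.cells.map fun c => {x : Fin d → ℝ | x i ≤ θ} ∩ c) ++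
      (r.cells.map fun c => {x : Fin d → ℝ | θ < x i} ∩ c)

/-- The groups of points of `X` reaching each leaf of the tree `t`. -/
noncomputable def inducedGroups {d : ℕ} (X : Finset (Fin d → ℝ)) (t : DTree d) :
    List (Finset (Fin d → ℝ)) :=
  t.cells.map fun c => X.filter (· ∈ c)

/-- `P` is a partition of `X` into `m` nonempty groups induced by the leaves of a
standard axis-aligned decision tree with `m` leaves (an explainable partition). -/
noncomputable def IsExplainablePartition {d : ℕ} (X : Finset (Fin d → ℝ)) (m : ℕ)
    (P : Finset (Finset (Fin d → ℝ))) : Prop :=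
  ∃ t : DTree d, t.cells.length = m ∧ (∀ s ∈ inducedGroups X t, s.Nonempty) ∧
    P = (inducedGroups X t).toFinset

/-- The spacing of a partition `P` with respect to a distance function `dist`. -/
noncomputable def spacing {α : Type*} (dist : α → α → ℝ) (P : Finset (Finset α)) : ℝ :=
  sInf {r : ℝ | ∃ s ∈ P, ∃ s' ∈ P, s ≠ s' ∧ ∃ x ∈ s, ∃ y ∈ s', r = dist x y}

/-- The maximum spacing over all explainable partitions of `X` into `m` nonempty groups. -/
noncomputable def maxSpacing {d : ℕ} (X : Finset (Fin d → ℝ))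
    (dist : (Fin d → ℝ) → (Fin d → ℝ) → ℝ) (m : ℕ) : ℝ :=
  sSup {r : ℝ | ∃ P : Finset (Finset (Fin d → ℝ)),
    IsExplainablePartition X m P ∧ r = spacing dist P}

/-- `L'` is obtained from `L` by splitting one of its groups with an axis-aligned cut
into two nonempty parts. -/
noncomputable def IsSplitOf {d : ℕ} (L L' : Finset (Finset (Fin d → ℝ))) : Prop :=
  ∃ ℓ ∈ L, ∃ c : Fin d, ∃ θ : ℝ,
    (ℓ.filter fun x => x c ≤ θ).Nonempty ∧
    (ℓ.filter fun x => θ < x c).Nonempty ∧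
    L' = insert (ℓ.filter fun x => x c ≤ θ)
          (insert (ℓ.filter fun x => θ < x c) (L.erase ℓ))

/-!
Let `r` be the spacing of an explainable partition `P` with more groups than the current greedy
partition `L`, and suppose that distinct groups of `L` are at least `r` apart. By counting, some
group `ℓ` of `L` is contained in no group of `P`. The first cut of the tree of `P` that has points
of `ℓ` on both sides separates only pairs of points of `ℓ` that lie in different groups of `P`, so
splitting `ℓ` by it keeps distinct groups at least `r` apart, and the greedy split does at least
as well. By induction the groups of the greedy partition stay at least `r` apart until there are
as many of them as in `P`.
-/

section Spacing

variable {α : Type*} {dist : α → α → ℝ} {r : ℝ} {P : Finset (Finset α)}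

/-- Points lying in distinct groups of `P` are at distance at least `r`, in both directions since
`dist` need not be symmetric. This stands for `r ≤ spacing dist P`, but it is true rather than junk
for a family with a single group, whose `spacing` is the infimum of the empty set. -/
def IsSpaced (dist : α → α → ℝ) (r : ℝ) (P : Finset (Finset α)) : Prop :=
  (P : Set (Finset α)).Pairwise fun s s' => ∀ x ∈ s, ∀ y ∈ s', r ≤ dist x y

lemma isSpaced_singleton (s : Finset α) : IsSpaced dist r {s} := by
  simp [IsSpaced]

lemma isSpaced_of_le_spacing (h : r ≤ spacing dist P) : IsSpaced dist r P := by
  intro s hs s' hs' hne x hx y hy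
  have hfinite : {r | ∃ s ∈ P, ∃ s' ∈ P, s ≠ s' ∧ ∃ x ∈ s, ∃ y ∈ s', r = dist x y}.Finite := by
    refine ((P.sup id ×ˢ P.sup id).finite_toSet.image fun p => dist p.1 p.2).subset ?_
    rintro _ ⟨s, hs, s', hs', -, x, hx, y, hy, rfl⟩
    exact ⟨(x, y), mem_product.2 ⟨mem_sup.2 ⟨s, hs, hx⟩, mem_sup.2 ⟨s', hs', hy⟩⟩, rfl⟩
  exact h.trans (csInf_le hfinite.bddBelow ⟨s, hs, s', hs', hne, x, hx, y, hy, rfl⟩)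

lemma IsSpaced.le_spacing (h : IsSpaced dist r P) {s s' : Finset α} (hs : s ∈ P) (hs' : s' ∈ P)
    (hne : s ≠ s') (hsne : s.Nonempty) (hsne' : s'.Nonempty) : r ≤ spacing dist P := by
  obtain ⟨x, hx⟩ := hsne
  obtain ⟨y, hy⟩ := hsne'
  refine le_csInf ⟨_, s, hs, s', hs', hne, x, hx, y, hy, rfl⟩ ?_
  rintro _ ⟨s, hs, s', hs', hne, x, hx, y, hy, rfl⟩
  exact h hs hs' hne x hx y hy

variable [DecidableEq α]

lemma IsSpaced.le_dist (h : IsSpaced dist r P) {x y : α} (hx : x ∈ P.sup id) (hy : y ∈ P.sup id)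
    (hxy : ∀ s ∈ P, ¬(x ∈ s ∧ y ∈ s)) : r ≤ dist x y := by
  obtain ⟨s, hs, hxs⟩ := mem_sup.1 hx
  obtain ⟨s', hs', hys'⟩ := mem_sup.1 hy
  have hne : s ≠ s' := by
    rintro rfl
    exact hxy s hs ⟨hxs, hys'⟩
  exact h hs hs' hne x hxs y hys'

lemma IsSpaced.insert_insert_erase (h : IsSpaced dist r P) {s a b : Finset α} (hs : s ∈ P)
    (has : a ⊆ s) (hbs : b ⊆ s) (hab : ∀ x ∈ a, ∀ y ∈ b, r ≤ dist x y ∧ r ≤ dist y x) :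
    IsSpaced dist r (insert a (insert b (P.erase s))) := by
  have hrest : ∀ c ⊆ s, ∀ s' ∈ P.erase s,
      (∀ x ∈ c, ∀ y ∈ s', r ≤ dist x y) ∧ ∀ y ∈ s', ∀ x ∈ c, r ≤ dist y x := by
    intro c hc s' hs'
    obtain ⟨hne, hs'P⟩ := mem_erase.1 hs'
    exact ⟨fun x hx y hy => h hs hs'P hne.symm x (hc hx) y hy,
      fun y hy x hx => h hs'P hs hne y hy x (hc hx)⟩
  simp only [IsSpaced, coe_insert]
  refine ((h.mono (coe_subset.2 (erase_subset s P))).insert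
    fun s' hs' _ => hrest b hbs s' hs').insert ?_
  rintro s' (rfl | hs') -
  · exact ⟨fun x hx y hy => (hab x hx y hy).1, fun y hy x hx => (hab x hx y hy).2⟩
  · exact hrest a has s' hs'

end Spacing

section Trees

variable {d m : ℕ} {X : Finset (Fin d → ℝ)} {t : DTree d} {P L L' : Finset (Finset (Fin d → ℝ))}

lemma inducedGroups_leaf (X : Finset (Fin d → ℝ)) : inducedGroups X .leaf = [X] := by
  simp [inducedGroups, DTree.cells]

lemma inducedGroups_node (X : Finset (Fin d → ℝ)) (i : Fin d) (θ : ℝ) (l r : DTree d) :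
    inducedGroups X (.node i θ l r) =
      inducedGroups {x ∈ X | x i ≤ θ} l ++ inducedGroups {x ∈ X | θ < x i} r := by
  simp [inducedGroups, DTree.cells, Function.comp_def, filter_filter]

lemma sup_inducedGroups (X : Finset (Fin d → ℝ)) (t : DTree d) :
    (inducedGroups X t).toFinset.sup id = X := by
  induction t generalizing X with
  | leaf => simp [inducedGroups_leaf]
  | node i θ l r ihl ihr =>
    rw [inducedGroups_node, List.toFinset_append, sup_union, ihl, ihr]
    simp only [← not_le]
    exact filter_union_filter_not_eq _ X

lemma subset_of_mem_inducedGroups {s : Finset (Fin d → ℝ)} (hs : s ∈ inducedGroups X t) :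
    s ⊆ X := by
  rw [← sup_inducedGroups X t]
  exact le_sup (f := id) (List.mem_toFinset.2 hs)

lemma pairwise_disjoint_inducedGroups (X : Finset (Fin d → ℝ)) (t : DTree d) :
    (inducedGroups X t).Pairwise Disjoint := by
  induction t generalizing X with
  | leaf => simp [inducedGroups_leaf]
  | node i θ l r ihl ihr =>
    rw [inducedGroups_node, List.pairwise_append]
    refine ⟨ihl _, ihr _, fun s hs s' hs' => ?_⟩
    have hsides : Disjoint {x ∈ X | x i ≤ θ} {x ∈ X | θ < x i} :=
      disjoint_filter.2 fun _ _ => not_lt.2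
    exact hsides.mono (subset_of_mem_inducedGroups hs) (subset_of_mem_inducedGroups hs')

lemma nodup_inducedGroups (hne : ∀ s ∈ inducedGroups X t, s.Nonempty) :
    (inducedGroups X t).Nodup :=
  (pairwise_disjoint_inducedGroups X t).imp_of_mem fun hs _ hdisj =>
    hdisj.ne (hne _ hs).ne_empty

lemma IsExplainablePartition.exists_finpartition (h : IsExplainablePartition X m P) :
    ∃ F : Finpartition X, F.parts = P ∧ #F.parts = m := by
  obtain ⟨t, rfl, hne, rfl⟩ := h
  have hnodup := nodup_inducedGroups hne
  refine ⟨⟨(inducedGroups X t).toFinset, ?_, sup_inducedGroups X t, ?_⟩, rfl, ?_⟩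
  · rw [supIndep_iff_pairwiseDisjoint]
    exact (List.pairwiseDisjoint_iff_coe_toFinset_pairwise_disjoint hnodup).2
      (pairwise_disjoint_inducedGroups X t)
  · simpa using fun h => (hne ∅ h).ne_empty rfl
  · rw [List.toFinset_card_of_nodup hnodup, inducedGroups, List.length_map]

lemma isExplainablePartition_singleton (hX : X.Nonempty) : IsExplainablePartition X 1 {X} :=
  ⟨.leaf, rfl, by simpa [inducedGroups_leaf] using hX, by simp [inducedGroups_leaf]⟩

lemma exists_inducedGroups_perm_cons_cons {ℓ : Finset (Fin d → ℝ)} (hℓ : ℓ ∈ inducedGroups X t)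
    (j : Fin d) (η : ℝ) :
    ∃ (t' : DTree d) (rest : List (Finset (Fin d → ℝ))),
      (inducedGroups X t).Perm (ℓ :: rest) ∧
      (inducedGroups X t').Perm ({x ∈ ℓ | x j ≤ η} :: {x ∈ ℓ | η < x j} :: rest) := by
  induction t generalizing X with
  | leaf =>
    obtain rfl : ℓ = X := by simpa [inducedGroups_leaf] using hℓ
    exact ⟨.node j η .leaf .leaf, [], by simp [inducedGroups_leaf],
      by simp [inducedGroups_node, inducedGroups_leaf]⟩
  | node i θ l r ihl ihr =>
    rw [inducedGroups_node, List.mem_append] at hℓ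
    simp only [inducedGroups_node X i θ l r]
    rcases hℓ with hℓ | hℓ
    · obtain ⟨l', rest, hl, hl'⟩ := ihl hℓ
      refine ⟨.node i θ l' r, rest ++ inducedGroups {x ∈ X | θ < x i} r, hl.append_right _, ?_⟩
      rw [inducedGroups_node]
      exact hl'.append_right _
    · obtain ⟨r', rest, hr, hr'⟩ := ihr hℓ
      refine ⟨.node i θ l r', inducedGroups {x ∈ X | x i ≤ θ} l ++ rest,
        (hr.append_left _).trans List.perm_middle, ?_⟩
      rw [inducedGroups_node]
      exact (hr'.append_left _).trans (List.perm_middle.trans (List.perm_middle.cons _))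

lemma IsExplainablePartition.of_isSplitOf (h : IsExplainablePartition X m L)
    (hsplit : IsSplitOf L L') : IsExplainablePartition X (m + 1) L' := by
  obtain ⟨t, rfl, hne, rfl⟩ := h
  obtain ⟨ℓ, hℓ, j, η, hleft, hright, rfl⟩ := hsplit
  obtain ⟨t', rest, ht, ht'⟩ := exists_inducedGroups_perm_cons_cons (List.mem_toFinset.1 hℓ) j η
  have hℓrest : ℓ ∉ rest := (List.nodup_cons.1 (ht.nodup_iff.1 (nodup_inducedGroups hne))).1
  refine ⟨t', ?_, fun s hs => ?_, ?_⟩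
  · simpa [inducedGroups, ht.length_eq] using ht'.length_eq.trans
      (congrArg (· + 1) ht.length_eq.symm)
  · rcases List.mem_cons.1 (ht'.mem_iff.1 hs) with rfl | hs
    · exact hleft
    rcases List.mem_cons.1 hs with rfl | hs
    · exact hright
    · exact hne s (ht.mem_iff.2 (List.mem_cons_of_mem ℓ hs))
  · rw [List.toFinset_eq_of_perm _ _ ht, List.toFinset_eq_of_perm _ _ ht', List.toFinset_cons,
      List.toFinset_cons, List.toFinset_cons, erase_insert (mt List.mem_toFinset.1 hℓrest)]

lemma exists_cut_of_forall_not_subset {ℓ : Finset (Fin d → ℝ)} (hℓX : ℓ ⊆ X)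
    (hℓ : ∀ s ∈ inducedGroups X t, ¬ℓ ⊆ s) :
    ∃ (i : Fin d) (θ : ℝ), {x ∈ ℓ | x i ≤ θ}.Nonempty ∧ {x ∈ ℓ | θ < x i}.Nonempty ∧
      ∀ x ∈ ℓ, ∀ y ∈ ℓ, x i ≤ θ → θ < y i → ∀ s ∈ inducedGroups X t, ¬(x ∈ s ∧ y ∈ s) := by
  induction t generalizing X with
  | leaf => exact absurd hℓX (hℓ X (by simp [inducedGroups_leaf]))
  | node i θ l r ihl ihr =>
    simp only [inducedGroups_node, List.mem_append, or_imp, forall_and] at hℓ ⊢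
    have hgroup_le : ∀ s ∈ inducedGroups {x ∈ X | x i ≤ θ} l, ∀ x ∈ s, x i ≤ θ :=
      fun s hs x hx => (mem_filter.1 (subset_of_mem_inducedGroups hs hx)).2
    have hgroup_lt : ∀ s ∈ inducedGroups {x ∈ X | θ < x i} r, ∀ x ∈ s, θ < x i :=
      fun s hs x hx => (mem_filter.1 (subset_of_mem_inducedGroups hs hx)).2
    by_cases hleft : ∀ x ∈ ℓ, x i ≤ θ
    · obtain ⟨j, η, hle, hlt, hsep⟩ :=
        ihl (fun x hx => mem_filter.2 ⟨hℓX hx, hleft x hx⟩) hℓ.1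
      exact ⟨j, η, hle, hlt, hsep,
        fun x hx _ _ _ _ s hs hxy => (hgroup_lt s hs x hxy.1).not_ge (hleft x hx)⟩
    by_cases hright : ∀ x ∈ ℓ, θ < x i
    · obtain ⟨j, η, hle, hlt, hsep⟩ :=
        ihr (fun x hx => mem_filter.2 ⟨hℓX hx, hright x hx⟩) hℓ.2
      exact ⟨j, η, hle, hlt,
        fun x hx _ _ _ _ s hs hxy => (hgroup_le s hs x hxy.1).not_gt (hright x hx), hsep⟩
    · push Not at hleft hright
      exact ⟨i, θ, filter_nonempty_iff.2 hright, filter_nonempty_iff.2 hleft,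
        fun _ _ y _ _ hy s hs hxy => (hgroup_le s hs y hxy.2).not_gt hy,
        fun x _ _ _ hx _ s hs hxy => (hgroup_lt s hs x hxy.1).not_ge hx⟩

end Trees

section Splits

variable {d m n : ℕ} {X : Finset (Fin d → ℝ)} {dist : (Fin d → ℝ) → (Fin d → ℝ) → ℝ} {r : ℝ}
  {P L L' : Finset (Finset (Fin d → ℝ))}

lemma IsSplitOf.le_spacing (hsplit : IsSplitOf L L') (h : IsSpaced dist r L') :
    r ≤ spacing dist L' := by
  obtain ⟨ℓ, -, j, η, hleft, hright, rfl⟩ := hsplit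
  have hdisj : Disjoint {x ∈ ℓ | x j ≤ η} {x ∈ ℓ | η < x j} :=
    disjoint_filter.2 fun _ _ => not_lt.2
  exact h.le_spacing (mem_insert_self _ _) (mem_insert_of_mem (mem_insert_self _ _))
    (hdisj.ne hleft.ne_empty) hleft hright

lemma IsExplainablePartition.exists_isSplitOf_isSpaced (hL : IsExplainablePartition X n L)
    (hP : IsExplainablePartition X m P) (hnm : n < m) (hLr : IsSpaced dist r L)
    (hPr : IsSpaced dist r P) : ∃ L', IsSplitOf L L' ∧ IsSpaced dist r L' := by
  obtain ⟨F, rfl, hF⟩ := hL.exists_finpartition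
  obtain ⟨Q, hQP, hQ⟩ := hP.exists_finpartition
  obtain ⟨t, -, -, rfl⟩ := hP
  have hFQ : ¬F ≤ Q := fun h => by
    have := Finpartition.card_mono h
    omega
  obtain ⟨ℓ, hℓ, hℓt⟩ : ∃ ℓ ∈ F.parts, ∀ s ∈ inducedGroups X t, ¬ℓ ⊆ s := by
    by_contra! hsub
    refine hFQ fun ℓ hℓ => ?_
    simpa [hQP] using hsub ℓ hℓ
  obtain ⟨j, η, hleft, hright, hsep⟩ := exists_cut_of_forall_not_subset (F.le hℓ) hℓt
  refine ⟨_, ⟨ℓ, hℓ, j, η, hleft, hright, rfl⟩,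
    hLr.insert_insert_erase hℓ (filter_subset _ _) (filter_subset _ _) fun x hx y hy => ?_⟩
  obtain ⟨hxℓ, hxη⟩ := mem_filter.1 hx
  obtain ⟨hyℓ, hyη⟩ := mem_filter.1 hy
  have hxy : ∀ s ∈ (inducedGroups X t).toFinset, ¬(x ∈ s ∧ y ∈ s) := fun s hs =>
    hsep x hxℓ y hyℓ hxη hyη s (List.mem_toFinset.1 hs)
  have hX : ∀ z ∈ ℓ, z ∈ (inducedGroups X t).toFinset.sup id := by
    rw [sup_inducedGroups]
    exact fun z hz => F.le hℓ hz
  exact ⟨hPr.le_dist (hX x hxℓ) (hX y hyℓ) hxy,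
    hPr.le_dist (hX y hyℓ) (hX x hxℓ) fun s hs h => hxy s hs h.symm⟩

/-- `L'` results from `L` by one greedy MaxSpacing step: a split of one group by an axis-aligned
cut whose result has the largest spacing among all such splits of `L`. -/
def IsGreedySplit (dist : (Fin d → ℝ) → (Fin d → ℝ) → ℝ)
    (L L' : Finset (Finset (Fin d → ℝ))) : Prop :=
  IsSplitOf L L' ∧ ∀ L'', IsSplitOf L L'' → spacing dist L'' ≤ spacing dist L'

lemma IsGreedySplit.isSpaced (hgreedy : IsGreedySplit dist L L')
    (hL : IsExplainablePartition X n L) (hP : IsExplainablePartition X m P) (hnm : n < m)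
    (hLr : IsSpaced dist r L) (hPr : IsSpaced dist r P) : IsSpaced dist r L' := by
  obtain ⟨L'', hsplit, hL''⟩ := hL.exists_isSplitOf_isSpaced hP hnm hLr hPr
  exact isSpaced_of_le_spacing ((hsplit.le_spacing hL'').trans (hgreedy.2 L'' hsplit))

end Splits

section Greedy

variable {d m n : ℕ} {X : Finset (Fin d → ℝ)} {dist : (Fin d → ℝ) → (Fin d → ℝ) → ℝ} {r : ℝ}
  {P : Finset (Finset (Fin d → ℝ))} {L : ℕ → Finset (Finset (Fin d → ℝ))}

lemma isExplainablePartition_of_forall_isSplitOf (hX : X.Nonempty) (hL0 : L 0 = {X})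
    (hsplit : ∀ i < n, IsSplitOf (L i) (L (i + 1))) : IsExplainablePartition X (n + 1) (L n) := by
  induction n with
  | zero => exact hL0 ▸ isExplainablePartition_singleton hX
  | succ n ih => exact (ih fun i hi => hsplit i (by omega)).of_isSplitOf (hsplit n n.lt_succ_self)

lemma isSpaced_of_forall_isGreedySplit (hX : X.Nonempty) (hL0 : L 0 = {X})
    (hgreedy : ∀ i < n, IsGreedySplit dist (L i) (L (i + 1)))
    (hP : IsExplainablePartition X m P) (hnm : n < m) (hPr : IsSpaced dist r P) :
    IsSpaced dist r (L n) := by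
  induction n with
  | zero => exact hL0 ▸ isSpaced_singleton X
  | succ n ih =>
    have hprev : ∀ i < n, IsGreedySplit dist (L i) (L (i + 1)) := fun i hi =>
      hgreedy i (by omega)
    have hexpl : IsExplainablePartition X (n + 1) (L n) :=
      isExplainablePartition_of_forall_isSplitOf hX hL0 fun i hi => (hprev i hi).1
    exact (hgreedy n n.lt_succ_self).isSpaced hexpl hP hnm (ih hprev (by omega)) hPr

end Greedy

theorem stmt_17_general {d n : ℕ} {X : Finset (Fin d → ℝ)}
    {dist : (Fin d → ℝ) → (Fin d → ℝ) → ℝ} {L : ℕ → Finset (Finset (Fin d → ℝ))}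
    (hX : X.Nonempty) (hL0 : L 0 = {X}) (hn : 1 ≤ n)
    (hgreedy : ∀ i < n, IsGreedySplit dist (L i) (L (i + 1))) :
    IsGreatest {r | ∃ P, IsExplainablePartition X (n + 1) P ∧ r = spacing dist P}
      (spacing dist (L n)) := by
  have hsplit : ∀ i < n, IsSplitOf (L i) (L (i + 1)) := fun i hi => (hgreedy i hi).1
  refine ⟨⟨L n, isExplainablePartition_of_forall_isSplitOf hX hL0 hsplit, rfl⟩, ?_⟩
  rintro _ ⟨P, hP, rfl⟩
  have hspaced : IsSpaced dist (spacing dist P) (L n) :=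
    isSpaced_of_forall_isGreedySplit hX hL0 hgreedy hP n.lt_succ_self
      (isSpaced_of_le_spacing le_rfl)
  obtain ⟨n, rfl⟩ := Nat.exists_eq_add_of_le' hn
  exact (hsplit n n.lt_succ_self).le_spacing hspaced

theorem stmt_17 {d : ℕ} (X : Finset (Fin d → ℝ))
    (dist : (Fin d → ℝ) → (Fin d → ℝ) → ℝ) (hdist : ∀ x y, 0 ≤ dist x y)
    (k : ℕ) (hk : k ≤ X.card)
    (L : ℕ → Finset (Finset (Fin d → ℝ)))
    (hL0 : L 0 = {X}) (hX : X.Nonempty)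
    (hgreedy : ∀ i : ℕ, i + 2 ≤ k →
      IsSplitOf (L i) (L (i + 1)) ∧
      ∀ L'' : Finset (Finset (Fin d → ℝ)),
        IsSplitOf (L i) L'' → spacing dist L'' ≤ spacing dist (L (i + 1))) :
    ∀ i : ℕ, 1 ≤ i → i + 1 ≤ k → spacing dist (L i) = maxSpacing X dist (i + 1) :=
  fun i hi hik =>
    (stmt_17_general hX hL0 hi fun j hj => hgreedy j (by omega)).csSup_eq.symm
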